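/- Let S and T be finite nonempty subsets of ℝ^d that are strictly linearly separable. Then there exist subsets S' ⊆ S and T' ⊆ T with |S'| + |T'| ≤ d + 1 such that every maximum-margin separating hyperplane (w, b) for the pair (S', T') strictly separates S and T: w·p + b < 0 for all p ∈ S and w·q + b > 0 for all q ∈ T. -/

import Mathlib

/-!
Let `v = y - x` be the vector of least norm joining a point `x` of `conv S` to a point `y` of
`conv T`. It is nonzero, and `S`, `T` lie beyond the two hyperplanes orthogonal to `v` through `x`
and `y` (`exists_closest`).

The key point is that `v` is already a difference `y' - x'` with `x' ∈ conv S'`, `y' ∈ conv T'` for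
nonempty `S' ⊆ S`, `T' ⊆ T` with at most `d + 1` points in total (`exists_small`). With `c` the
midpoint of `x` and `y`, lift `q ∈ T` to `(q - c, 1)` and `p ∈ S` to `(c - p, -1)` in `ℝ^d × ℝ`;
then `(v / 2, 0)` is in the convex hull of the lifted points. Carathéodory's theorem writes it as a
positive combination of affinely independent lifted points. The linear functional
`(z, t) ↦ ⟪v, z⟫` is at least `‖v‖² / 2` on the lifted points and equal to `‖v‖² / 2` at
`(v / 2, 0)`, so it is constant and nonzero on the points used. These are therefore linearly
independent, and there are at most `d + 1` of them. The last coordinate shows that both kinds of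
points carry total weight `1 / 2`.

Finally, the bisector of `x'` and `y'` has margin at least `‖v‖ / 2` on `(S', T')`, and a hyperplane
with that margin must be this bisector, which separates `S` and `T` (`sep_of_maxMargin`).
The sets `S'`, `T'` obtained are nonempty, so the maximum-margin hyperplane of `(S', T')` is the
genuine bisector and the conclusion does not hold vacuously.
-/

open scoped Classical

/-- Dot product on `EuclideanSpace ℝ (Fin d)`. -/
noncomputable def dotE {d : ℕ} (w p : EuclideanSpace ℝ (Fin d)) : ℝ := ∑ i, w i * p i

/-- `(w, b)` strictly separates `S` (negative side) from `T` (positive side). -/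
def SepST {d : ℕ} (w : EuclideanSpace ℝ (Fin d)) (b : ℝ)
    (S T : Finset (EuclideanSpace ℝ (Fin d))) : Prop :=
  (∀ p ∈ S, dotE w p + b < 0) ∧ (∀ q ∈ T, dotE w q + b > 0)

/-- The margin of `(w, b)` on `S ∪ T`: the infimum of `|w·p + b|` over `p ∈ S ∪ T`. -/
noncomputable def marginST {d : ℕ} (w : EuclideanSpace ℝ (Fin d)) (b : ℝ)
    (S T : Finset (EuclideanSpace ℝ (Fin d))) : ℝ :=
  sInf ((fun p => |dotE w p + b|) '' ((S ∪ T : Finset _) : Set _))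

/-- `(w, b)` is a maximum-margin separating hyperplane for the pair `(S, T)`:
it has unit norm, strictly separates `S` and `T`, and its margin is maximal among
all unit-norm strictly separating pairs. -/
def IsMaxMarginST {d : ℕ} (w : EuclideanSpace ℝ (Fin d)) (b : ℝ)
    (S T : Finset (EuclideanSpace ℝ (Fin d))) : Prop :=
  ‖w‖ = 1 ∧ SepST w b S T ∧
    ∀ (w' : EuclideanSpace ℝ (Fin d)) (b' : ℝ), ‖w'‖ = 1 → SepST w' b' S T →
      marginST w' b' S T ≤ marginST w b S T

open scoped RealInnerProductSpace Pointwise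

lemma dotE_eq_inner {d : ℕ} (w p : EuclideanSpace ℝ (Fin d)) : dotE w p = ⟪w, p⟫ := by
  simp [dotE, PiLp.inner_apply, mul_comm]

lemma le_inner_of_mem_convexHull {E : Type*} [NormedAddCommGroup E] [InnerProductSpace ℝ E]
    {s : Set E} {v x : E} {a : ℝ} (h : ∀ p ∈ s, a ≤ ⟪v, p⟫) (hx : x ∈ convexHull ℝ s) :
    a ≤ ⟪v, x⟫ :=
  convexHull_min (t := {p | a ≤ ⟪v, p⟫}) h
    (convex_halfSpace_ge (innerₛₗ ℝ v).isLinear a) hx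

lemma inner_le_of_mem_convexHull {E : Type*} [NormedAddCommGroup E] [InnerProductSpace ℝ E]
    {s : Set E} {v x : E} {a : ℝ} (h : ∀ p ∈ s, ⟪v, p⟫ ≤ a) (hx : x ∈ convexHull ℝ s) :
    ⟪v, x⟫ ≤ a :=
  convexHull_min (t := {p | ⟪v, p⟫ ≤ a}) h
    (convex_halfSpace_le (innerₛₗ ℝ v).isLinear a) hx

/-- A closest pair of points `x`, `y` of the two convex hulls, with the supporting inequalities
that minimality of `‖y - x‖` provides. -/
lemma exists_closest {d : ℕ} (S T : Finset (EuclideanSpace ℝ (Fin d)))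
    (hS : S.Nonempty) (hT : T.Nonempty)
    (hsep : ∃ (w : EuclideanSpace ℝ (Fin d)) (b : ℝ), SepST w b S T) :
    ∃ x ∈ convexHull ℝ (S : Set (EuclideanSpace ℝ (Fin d))),
    ∃ y ∈ convexHull ℝ (T : Set (EuclideanSpace ℝ (Fin d))), y - x ≠ 0 ∧
      (∀ p ∈ S, ⟪y - x, p⟫ ≤ ⟪y - x, x⟫) ∧ ∀ q ∈ T, ⟪y - x, y⟫ ≤ ⟪y - x, q⟫ := by
  obtain ⟨w, b, h1, h2⟩ := hsep
  simp only [dotE_eq_inner] at h1 h2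
  set A := convexHull ℝ (S : Set (EuclideanSpace ℝ (Fin d))) with hA
  set B := convexHull ℝ (T : Set (EuclideanSpace ℝ (Fin d))) with hB
  have hAc : IsCompact A := S.finite_toSet.isCompact_convexHull ℝ
  have hBc : IsCompact B := T.finite_toSet.isCompact_convexHull ℝ
  have hK : IsCompact (B - A) := by
    rw [sub_eq_add_neg]; exact hBc.add hAc.neg
  have hKne : (B - A).Nonempty :=
    Set.Nonempty.sub (Set.Nonempty.convexHull (by simpa using hT))
      (Set.Nonempty.convexHull (by simpa using hS))
  have hKconv : Convex ℝ (B - A) := (convex_convexHull ℝ _).sub (convex_convexHull ℝ _)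
  obtain ⟨v, hv, hmin⟩ := exists_norm_eq_iInf_of_complete_convex hKne hK.isComplete hKconv 0
  rw [norm_eq_iInf_iff_real_inner_le_zero hKconv hv] at hmin
  obtain ⟨y, hy, x, hx, rfl⟩ := Set.mem_sub.1 hv
  refine ⟨x, hx, y, hy, ?_, ?_, ?_⟩
  · intro h0
    have hxy : y = x := sub_eq_zero.1 h0
    obtain ⟨p, hp, hpx⟩ : ∃ p ∈ S, ⟪w, x⟫ ≤ ⟪w, p⟫ := by
      by_contra! hc
      obtain ⟨p, hp, hpm⟩ := S.exists_max_image (fun p => ⟪w, p⟫) hS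
      exact absurd (inner_le_of_mem_convexHull (s := (S : Set _)) hpm hx) (not_le.2 (hc p hp))
    have := le_inner_of_mem_convexHull (s := (T : Set _)) (v := w) (a := -b)
      (fun q hq => by linarith [h2 q hq]) hy
    rw [hxy] at this
    linarith [h1 p hp]
  · intro p hp
    have := hmin (y - p) (Set.sub_mem_sub hy (subset_convexHull ℝ _ hp))
    simp only [zero_sub, inner_neg_left, inner_sub_right] at this ⊢
    linarith
  · intro q hq
    have := hmin (q - x) (Set.sub_mem_sub (subset_convexHull ℝ _ hq) hx)
    simp only [zero_sub, inner_neg_left, inner_sub_right] at this ⊢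
    linarith

/-- Affinely independent points on a hyperplane avoiding the origin are linearly independent. -/
lemma AffineIndependent.linearIndependent_of_const {ι V : Type*} [Fintype ι] [AddCommGroup V]
    [Module ℝ V] {z : ι → V} (hz : AffineIndependent ℝ z) (f : V →ₗ[ℝ] ℝ) {a : ℝ} (ha : a ≠ 0)
    (hf : ∀ i, f (z i) = a) : LinearIndependent ℝ z := by
  rw [Fintype.linearIndependent_iff]
  intro g hg i
  have h0 : ∑ i, g i = 0 := by
    have := congrArg f hg
    simp only [map_sum, map_smul, hf, smul_eq_mul, map_zero, ← Finset.sum_mul] at this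
    exact (mul_eq_zero.1 this).resolve_right ha
  exact (affineIndependent_iff.1 hz) Finset.univ g h0 hg i (Finset.mem_univ i)

/-- The vector between closest points of the two hulls is a difference of points in the hulls of
nonempty subsets with at most `d + 1` points in total. -/
lemma exists_small {d : ℕ} (S T : Finset (EuclideanSpace ℝ (Fin d)))
    {x y : EuclideanSpace ℝ (Fin d)}
    (hx : x ∈ convexHull ℝ (S : Set (EuclideanSpace ℝ (Fin d))))
    (hy : y ∈ convexHull ℝ (T : Set (EuclideanSpace ℝ (Fin d)))) (hv : y - x ≠ 0)
    (hSx : ∀ p ∈ S, ⟪y - x, p⟫ ≤ ⟪y - x, x⟫) (hTy : ∀ q ∈ T, ⟪y - x, y⟫ ≤ ⟪y - x, q⟫) :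
    ∃ S' ⊆ S, ∃ T' ⊆ T, S'.Nonempty ∧ T'.Nonempty ∧ S'.card + T'.card ≤ d + 1 ∧
      ∃ x' ∈ convexHull ℝ (S' : Set (EuclideanSpace ℝ (Fin d))),
      ∃ y' ∈ convexHull ℝ (T' : Set (EuclideanSpace ℝ (Fin d))), y' - x' = y - x := by
  set v := y - x with hvdef
  set c : EuclideanSpace ℝ (Fin d) := (1 / 2 : ℝ) • (x + y) with hc
  have hvv : ⟪v, y⟫ - ⟪v, x⟫ = ⟪v, v⟫ := by rw [← inner_sub_right]
  have hvpos : 0 < ⟪v, v⟫ := real_inner_self_pos.2 hv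
  have hvc : ⟪v, c⟫ = (⟪v, x⟫ + ⟪v, y⟫) / 2 := by
    rw [hc, inner_smul_right, inner_add_right]; ring
  set P : Set (EuclideanSpace ℝ (Fin d) × ℝ) :=
    {z | (z.2 = 1 ∧ z.1 + c ∈ T) ∨ (z.2 = -1 ∧ c - z.1 ∈ S)} with hP
  -- Both lifts are affine maps, so they carry the hulls into the hull of the lifted points.
  have hyP : (y - c, (1 : ℝ)) ∈ convexHull ℝ P := by
    let F : EuclideanSpace ℝ (Fin d) →ᵃ[ℝ] EuclideanSpace ℝ (Fin d) × ℝ :=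
      (AffineMap.id ℝ _ - AffineMap.const ℝ _ c).prod (AffineMap.const ℝ _ 1)
    have : F y ∈ convexHull ℝ (F '' (T : Set _)) := by
      rw [← F.image_convexHull]; exact ⟨y, hy, rfl⟩
    refine convexHull_mono ?_ this
    rintro _ ⟨q, hq, rfl⟩
    exact Or.inl ⟨rfl, by simpa [F] using hq⟩
  have hxP : (c - x, (-1 : ℝ)) ∈ convexHull ℝ P := by
    let F : EuclideanSpace ℝ (Fin d) →ᵃ[ℝ] EuclideanSpace ℝ (Fin d) × ℝ :=
      (AffineMap.const ℝ _ c - AffineMap.id ℝ _).prod (AffineMap.const ℝ _ (-1))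
    have : F x ∈ convexHull ℝ (F '' (S : Set _)) := by
      rw [← F.image_convexHull]; exact ⟨x, hx, rfl⟩
    refine convexHull_mono ?_ this
    rintro _ ⟨q, hq, rfl⟩
    exact Or.inr ⟨rfl, by simpa [F] using hq⟩
  have hmem : ((1 / 2 : ℝ) • v, (0 : ℝ)) ∈ convexHull ℝ P := by
    have := convex_convexHull ℝ P hyP hxP (a := 1 / 2) (b := 1 / 2) (by norm_num) (by norm_num)
      (by norm_num)
    convert this using 1
    ext1
    · simp only [Prod.fst_add, Prod.smul_fst, hvdef]; module
    · simp
  obtain ⟨ι, _, z, r, hzP, hai, hr0, hr1, hrz⟩ := eq_pos_convex_span_of_mem_convexHull hmem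
  have hz : ∀ i, ((z i).2 = 1 ∧ (z i).1 + c ∈ T) ∨ ((z i).2 = -1 ∧ c - (z i).1 ∈ S) :=
    fun i => hzP ⟨i, rfl⟩
  have hz1 : ∑ i, r i • (z i).1 = (1 / 2 : ℝ) • v := by
    simpa [Prod.fst_sum] using congrArg Prod.fst hrz
  have hz2 : ∑ i, r i * (z i).2 = 0 := by
    simpa [Prod.snd_sum] using congrArg Prod.snd hrz
  have hge : ∀ i, ⟪v, v⟫ / 2 ≤ ⟪v, (z i).1⟫ := by
    intro i
    rcases hz i with ⟨-, h⟩ | ⟨-, h⟩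
    · have := hTy _ h
      rw [inner_add_right] at this
      linarith
    · have := hSx _ h
      rw [inner_sub_right] at this
      linarith
  have heq : ∀ i, ⟪v, (z i).1⟫ = ⟪v, v⟫ / 2 := by
    have hsum : ∑ i, r i * (⟪v, (z i).1⟫ - ⟪v, v⟫ / 2) = 0 := by
      have := congrArg (fun u => ⟪v, u⟫) hz1
      simp only [inner_sum, inner_smul_right] at this
      simp only [mul_sub, Finset.sum_sub_distrib, this, ← Finset.sum_mul, hr1]
      ring
    rw [Finset.sum_eq_zero_iff_of_nonneg
      (fun i _ => mul_nonneg (hr0 i).le (sub_nonneg.2 (hge i)))] at hsum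
    intro i
    have := (mul_eq_zero.1 (hsum i (Finset.mem_univ i))).resolve_left (hr0 i).ne'
    linarith
  have hli : LinearIndependent ℝ z :=
    hai.linearIndependent_of_const ((innerₛₗ ℝ v).comp (LinearMap.fst ℝ _ _))
      (a := ⟪v, v⟫ / 2) (by positivity) heq
  have hcard : Fintype.card ι ≤ d + 1 := by
    simpa using hli.fintype_card_le_finrank
  set I := Finset.univ.filter (fun i => (z i).2 = 1) with hI
  set J := Finset.univ.filter (fun i => ¬ (z i).2 = 1) with hJ
  have hIz : ∀ i ∈ I, (z i).2 = 1 ∧ (z i).1 + c ∈ T := by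
    intro i hi
    have h1 : (z i).2 = 1 := (Finset.mem_filter.1 hi).2
    rcases hz i with h | h
    · exact h
    · linarith [h.1]
  have hJz : ∀ i ∈ J, (z i).2 = -1 ∧ c - (z i).1 ∈ S := fun i hi =>
    (hz i).resolve_left (fun h => (Finset.mem_filter.1 hi).2 h.1)
  have hsplit : ∑ i ∈ I, r i + ∑ i ∈ J, r i = 1 := by
    rw [← hr1]; exact Finset.sum_filter_add_sum_filter_not _ _ _
  have hdiff : ∑ i ∈ I, r i - ∑ i ∈ J, r i = 0 := by
    have h1 : ∑ i ∈ I, r i * (z i).2 = ∑ i ∈ I, r i :=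
      Finset.sum_congr rfl fun i hi => by rw [(hIz i hi).1, mul_one]
    have h2 : ∑ i ∈ J, r i * (z i).2 = -∑ i ∈ J, r i := by
      rw [← Finset.sum_neg_distrib]
      exact Finset.sum_congr rfl fun i hi => by rw [(hJz i hi).1, mul_neg_one]
    have h3 : ∑ i ∈ I, r i * (z i).2 + ∑ i ∈ J, r i * (z i).2 = 0 := by
      rw [← hz2]; exact Finset.sum_filter_add_sum_filter_not _ _ _
    linarith
  have hI2 : ∑ i ∈ I, r i = 1 / 2 := by linarith
  have hJ2 : ∑ i ∈ J, r i = 1 / 2 := by linarith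
  have hIne : I.Nonempty := Finset.nonempty_of_sum_ne_zero (f := r) (by rw [hI2]; norm_num)
  have hJne : J.Nonempty := Finset.nonempty_of_sum_ne_zero (f := r) (by rw [hJ2]; norm_num)
  refine ⟨J.image (fun i => c - (z i).1), ?_, I.image (fun i => (z i).1 + c), ?_,
    hJne.image _, hIne.image _, ?_, ∑ i ∈ J, (2 * r i) • (c - (z i).1), ?_,
    ∑ i ∈ I, (2 * r i) • ((z i).1 + c), ?_, ?_⟩
  · exact Finset.image_subset_iff.2 fun i hi => (hJz i hi).2
  · exact Finset.image_subset_iff.2 fun i hi => (hIz i hi).2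
  · have h1 := Finset.card_image_le (s := J) (f := fun i => c - (z i).1)
    have h2 := Finset.card_image_le (s := I) (f := fun i => (z i).1 + c)
    have h3 : I.card + J.card = Fintype.card ι := Finset.card_filter_add_card_filter_not _
    omega
  · refine (convex_convexHull ℝ _).sum_mem (fun i _ => by linarith [hr0 i]) ?_ ?_
    · rw [← Finset.mul_sum, hJ2]; norm_num
    · exact fun i hi => subset_convexHull ℝ _ (Finset.mem_coe.2 (Finset.mem_image_of_mem _ hi))
  · refine (convex_convexHull ℝ _).sum_mem (fun i _ => by linarith [hr0 i]) ?_ ?_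
    · rw [← Finset.mul_sum, hI2]; norm_num
    · exact fun i hi => subset_convexHull ℝ _ (Finset.mem_coe.2 (Finset.mem_image_of_mem _ hi))
  · have h1 : ∑ i ∈ I, r i • (z i).1 + ∑ i ∈ J, r i • (z i).1 = (1 / 2 : ℝ) • v := by
      rw [← hz1]; exact Finset.sum_filter_add_sum_filter_not _ _ _
    simp only [mul_smul, smul_add, smul_sub, Finset.sum_add_distrib, Finset.sum_sub_distrib,
      ← Finset.smul_sum, ← Finset.sum_smul, hI2, hJ2]
    calc _ = (2 : ℝ) • (∑ i ∈ I, r i • (z i).1 + ∑ i ∈ J, r i • (z i).1) := by module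
      _ = v := by rw [h1]; module

lemma marginST_le {d : ℕ} {w : EuclideanSpace ℝ (Fin d)} {b : ℝ}
    {S T : Finset (EuclideanSpace ℝ (Fin d))} {p : EuclideanSpace ℝ (Fin d)} (hp : p ∈ S ∪ T) :
    marginST w b S T ≤ |⟪w, p⟫ + b| := by
  rw [← dotE_eq_inner]
  exact csInf_le ((S ∪ T).finite_toSet.image _).bddBelow ⟨p, hp, rfl⟩

/-- If `y - x` realizes the distance between the hulls of `S` and `T`, with `x` and `y` in the hulls
of `S' ⊆ S` and `T' ⊆ T`, then a maximum-margin hyperplane for `(S', T')` is the bisector of `x`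
and `y`, and hence separates `S` and `T`. -/
lemma sep_of_maxMargin {d : ℕ} {S T S' T' : Finset (EuclideanSpace ℝ (Fin d))}
    (hSS : S' ⊆ S) (hTT : T' ⊆ T) (hS' : S'.Nonempty) {x y w : EuclideanSpace ℝ (Fin d)} {b : ℝ}
    (hx : x ∈ convexHull ℝ (S' : Set (EuclideanSpace ℝ (Fin d))))
    (hy : y ∈ convexHull ℝ (T' : Set (EuclideanSpace ℝ (Fin d)))) (hv : y - x ≠ 0)
    (hSx : ∀ p ∈ S, ⟪y - x, p⟫ ≤ ⟪y - x, x⟫) (hTy : ∀ q ∈ T, ⟪y - x, y⟫ ≤ ⟪y - x, q⟫)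
    (hmax : IsMaxMarginST w b S' T') : SepST w b S T := by
  obtain ⟨hw, ⟨hs1, hs2⟩, hopt⟩ := hmax
  simp only [dotE_eq_inner] at hs1 hs2
  have hN : 0 < ‖y - x‖ := norm_pos_iff.2 hv
  set w₀ : EuclideanSpace ℝ (Fin d) := ‖y - x‖⁻¹ • (y - x) with hw₀
  have hw₀1 : ‖w₀‖ = 1 := by
    rw [hw₀, norm_smul, norm_inv, norm_norm, inv_mul_cancel₀ hN.ne']
  have hgap : ⟪w₀, y⟫ - ⟪w₀, x⟫ = ‖y - x‖ := by
    rw [← inner_sub_right, hw₀, real_inner_smul_left, real_inner_self_eq_norm_sq]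
    field_simp
  have hS0 : ∀ p ∈ S, ⟪w₀, p⟫ ≤ ⟪w₀, x⟫ := fun p hp => by
    simp only [hw₀, real_inner_smul_left]
    exact mul_le_mul_of_nonneg_left (hSx p hp) (inv_nonneg.2 hN.le)
  have hT0 : ∀ q ∈ T, ⟪w₀, y⟫ ≤ ⟪w₀, q⟫ := fun q hq => by
    simp only [hw₀, real_inner_smul_left]
    exact mul_le_mul_of_nonneg_left (hTy q hq) (inv_nonneg.2 hN.le)
  set b₀ : ℝ := -(⟪w₀, x⟫ + ⟪w₀, y⟫) / 2 with hb₀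
  have hm : ‖y - x‖ / 2 ≤ marginST w b S' T' := by
    refine le_trans (le_csInf ?_ ?_) (hopt w₀ b₀ hw₀1 ⟨fun p hp => ?_, fun q hq => ?_⟩)
    · obtain ⟨p, hp⟩ := hS'
      exact ⟨_, p, Finset.mem_coe.2 (Finset.mem_union_left _ hp), rfl⟩
    · rintro _ ⟨p, hp, rfl⟩
      simp only [dotE_eq_inner]
      rcases Finset.mem_union.1 (Finset.mem_coe.1 hp) with h | h
      · have := hS0 p (hSS h)
        exact le_trans (by linarith) (neg_le_abs _)
      · have := hT0 p (hTT h)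
        exact le_trans (by linarith) (le_abs_self _)
    · have := hS0 p (hSS hp)
      rw [dotE_eq_inner]; linarith
    · have := hT0 q (hTT hq)
      rw [dotE_eq_inner]; linarith
  have hxb : ⟪w, x⟫ ≤ -b - ‖y - x‖ / 2 := by
    refine inner_le_of_mem_convexHull (fun p hp => ?_) hx
    have h1 := hm.trans (marginST_le (Finset.mem_union_left _ (Finset.mem_coe.1 hp)))
    rw [abs_of_neg (hs1 p hp)] at h1
    linarith
  have hyb : -b + ‖y - x‖ / 2 ≤ ⟪w, y⟫ := by
    refine le_inner_of_mem_convexHull (fun p hp => ?_) hy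
    have h1 := hm.trans (marginST_le (Finset.mem_union_right _ (Finset.mem_coe.1 hp)))
    rw [abs_of_pos (hs2 p hp)] at h1
    linarith
  -- The equality case of Cauchy–Schwarz forces the direction.
  have hww : w = w₀ := by
    have h1 : ⟪w, y - x⟫ ≤ ‖y - x‖ := by
      simpa [hw] using real_inner_le_norm w (y - x)
    have h2 : ⟪w, y - x⟫ = ‖w‖ * ‖y - x‖ := by
      rw [hw, one_mul]
      refine le_antisymm h1 ?_
      rw [inner_sub_right]; linarith
    have h3 := (inner_eq_norm_mul_iff_real).1 h2
    rw [hw, one_smul] at h3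
    rw [hw₀, eq_inv_smul_iff₀ hN.ne', h3]
  rw [hww] at hxb hyb ⊢
  refine ⟨fun p hp => ?_, fun q hq => ?_⟩
  · have := hS0 p hp
    rw [dotE_eq_inner]; linarith
  · have := hT0 q hq
    rw [dotE_eq_inner]; linarith

/-- For finite nonempty strictly separable `S, T ⊆ ℝ^d` there are subsets
`S' ⊆ S`, `T' ⊆ T` with `|S'| + |T'| ≤ d + 1` such that every maximum-margin
separating hyperplane for `(S', T')` strictly separates all of `S` and `T`. -/
theorem stmt6 {d : ℕ} (S T : Finset (EuclideanSpace ℝ (Fin d)))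
    (hS : S.Nonempty) (hT : T.Nonempty)
    (hsep : ∃ (w : EuclideanSpace ℝ (Fin d)) (b : ℝ), SepST w b S T) :
    ∃ S' ⊆ S, ∃ T' ⊆ T, S'.card + T'.card ≤ d + 1 ∧
      ∀ (w : EuclideanSpace ℝ (Fin d)) (b : ℝ),
        IsMaxMarginST w b S' T' → SepST w b S T := by
  obtain ⟨x, hx, y, hy, hv, hSx, hTy⟩ := exists_closest S T hS hT hsep
  obtain ⟨S', hSS, T', hTT, hS', -, hcard, x', hx', y', hy', hxy⟩ :=
    exists_small S T hx hy hv hSx hTy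
  -- `x'`, `y'` are again a closest pair, so the supporting inequalities transfer to them.
  have hx1 : ⟪y - x, x'⟫ ≤ ⟪y - x, x⟫ := inner_le_of_mem_convexHull (s := (S' : Set _))
    (fun p hp => hSx p (hSS hp)) hx'
  have hy1 : ⟪y - x, y⟫ ≤ ⟪y - x, y'⟫ := le_inner_of_mem_convexHull (s := (T' : Set _))
    (fun q hq => hTy q (hTT hq)) hy'
  have hd : ⟪y - x, y'⟫ - ⟪y - x, x'⟫ = ⟪y - x, y⟫ - ⟪y - x, x⟫ := by
    rw [← inner_sub_right, ← inner_sub_right, hxy]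
  refine ⟨S', hSS, T', hTT, hcard, fun w b hmax =>
    sep_of_maxMargin hSS hTT hS' hx' hy' (by rwa [hxy]) (fun p hp => ?_) (fun q hq => ?_) hmax⟩
  · rw [hxy]; linarith [hSx p hp]
  · rw [hxy]; linarith [hTy q hq]
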